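/- arXiv:math/0106263 — 3 statements merged into one kernel-verified Lean document; each statement's English description precedes it below -/
import Mathlib

section
/- Let n ≥ 3 be an integer and R > 0 a real constant. The equation h'' - (nR/(4(n-1))) h^(1-4/n) = -(n/4) C h admits a nonconstant positive periodic solution h : ℝ → ℝ if and only if the constant C is strictly positive. -/
open Real

/-!
After a change of constants the equation is Newton's equation `h'' = -F h` on `(0, ∞)` with force
`F x = b x - a x ^ p`, where `a > 0` and `p < 1`. If `b ≤ 0` then `h'' > 0`, so `h'` is strictly
increasing and `h` cannot be periodic.

If `b > 0`, then `F` has a zero `x₀ > 0` with `F' x₀ = b (1 - p) > 0`, a strict minimum of the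
potential `V`. Near it the Morse coordinate `s` with `V = V x₀ + s ^ 2 / 2` straightens the level
sets of the energy `h' ^ 2 / 2 + V h` into circles. On the circle of radius `r` one writes
`s = r sin θ`, `h' = r cos θ`, and Newton's equation becomes a scalar equation `θ' = f θ` with `f`
positive and `2π`-periodic. Its solutions run around the circle in a fixed time, which is the
period of `h`.
-/

open Filter Topology Set

section Calculus

theorem not_periodic_of_deriv_deriv_pos {f : ℝ → ℝ} (hf : ∀ t, 0 < deriv (deriv f) t)
    {T : ℝ} (hT : 0 < T) : ¬ Function.Periodic f T := by
  intro hper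
  have hderiv : deriv f T = deriv f 0 := by
    simpa [funext hper] using (deriv_comp_add_const f T 0).symm
  exact (strictMono_of_deriv_pos hf hT).ne' hderiv

theorem exists_eventually_hasDerivAt_of_eventually_continuousAt {E : Type*}
    [NormedAddCommGroup E] [NormedSpace ℝ E] [CompleteSpace E] {f : ℝ → E} {x₀ : ℝ}
    (hf : ∀ᶠ x in 𝓝 x₀, ContinuousAt f x) :
    ∃ V : ℝ → E, ∀ᶠ x in 𝓝 x₀, HasDerivAt V (f x) x := by
  obtain ⟨ε, hε, hball⟩ := Metric.eventually_nhds_iff_ball.1 hf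
  have hcont : ContinuousOn f (Metric.ball x₀ ε) := fun x hx => (hball x hx).continuousWithinAt
  refine ⟨fun x => ∫ y in x₀..x, f y, ?_⟩
  filter_upwards [Metric.ball_mem_nhds x₀ hε] with x hx
  have hsub : uIcc x₀ x ⊆ Metric.ball x₀ ε :=
    (convex_ball x₀ ε).ordConnected.uIcc_subset (Metric.mem_ball_self hε) hx
  exact intervalIntegral.integral_hasDerivAt_right (hcont.mono hsub).intervalIntegrable
    (hcont.stronglyMeasurableAtFilter Metric.isOpen_ball x hx) (hball x hx)

section DSlope

variable {𝕜 E : Type*} [NontriviallyNormedField 𝕜] [NormedAddCommGroup E] [NormedSpace 𝕜 E]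

theorem hasDerivAt_sub_smul {f : 𝕜 → E} {x₀ : 𝕜} (hf : ContinuousAt f x₀) :
    HasDerivAt (fun x => (x - x₀) • f x) (f x₀) x₀ := by
  rw [hasDerivAt_iff_tendsto_slope]
  refine (hf.tendsto.mono_left nhdsWithin_le_nhds).congr' ?_
  filter_upwards [self_mem_nhdsWithin] with x hx
  simp [slope_def_module, inv_smul_smul₀ (sub_ne_zero.2 hx)]

theorem continuousAt_dslope {f : 𝕜 → E} {a x : 𝕜} (ha : DifferentiableAt 𝕜 f a)
    (hx : ContinuousAt f x) : ContinuousAt (dslope f a) x := by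
  rcases eq_or_ne x a with rfl | hne
  · exact continuousAt_dslope_same.2 ha
  · exact (continuousAt_dslope_of_ne hne).2 hx

end DSlope

theorem hasDerivAt_dslope_same {V F : ℝ → ℝ} {x₀ c : ℝ}
    (hV : ∀ᶠ x in 𝓝 x₀, HasDerivAt V (F x) x) (hF : HasDerivAt F c x₀) :
    HasDerivAt (dslope V x₀) (c / 2) x₀ := by
  have hV₀ : HasDerivAt V (F x₀) x₀ := hV.self_of_nhds
  have hnum : ∀ᶠ x in 𝓝[≠] x₀,
      HasDerivAt (fun x => V x - V x₀ - F x₀ * (x - x₀)) (F x - F x₀) x := by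
    filter_upwards [hV.filter_mono nhdsWithin_le_nhds] with x hx
    have hlin := ((hasDerivAt_id x).sub_const x₀).const_mul (F x₀)
    exact ((hx.sub_const (V x₀)).sub hlin).congr_deriv (by simp)
  have hden (x : ℝ) : HasDerivAt (fun x => (x - x₀) ^ 2) (2 * (x - x₀)) x := by
    exact (((hasDerivAt_id x).sub_const x₀).pow 2).congr_deriv (by simp)
  have hlim : Tendsto (fun x => (F x - F x₀) / (2 * (x - x₀))) (𝓝[≠] x₀) (𝓝 (c / 2)) := by
    refine (hF.tendsto_slope.div_const 2).congr fun x => ?_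
    rw [slope_def_field, div_div, mul_comm]
  rw [hasDerivAt_iff_tendsto_slope]
  refine (HasDerivAt.lhopital_zero_nhdsNE hnum (.of_forall hden) ?_ ?_ ?_ hlim).congr' ?_
  · filter_upwards [self_mem_nhdsWithin] with x hx
    exact mul_ne_zero two_ne_zero (sub_ne_zero.2 hx)
  · have hcont : ContinuousAt (fun x => V x - V x₀ - F x₀ * (x - x₀)) x₀ :=
      (hV₀.continuousAt.sub_const _).sub (ContinuousAt.const_mul (by fun_prop) _)
    simpa using hcont.tendsto.mono_left nhdsWithin_le_nhds
  · simpa using (hden x₀).continuousAt.tendsto.mono_left nhdsWithin_le_nhds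
  · filter_upwards [self_mem_nhdsWithin] with x hx
    have hne : x - x₀ ≠ 0 := sub_ne_zero.2 hx
    rw [slope_def_field, dslope_of_ne _ hx, slope_def_field, dslope_same, hV₀.deriv]
    field_simp

theorem exists_local_inverse_hasDerivAt {𝕜 : Type*} [RCLike 𝕜] {G k : 𝕜 → 𝕜} {x₀ : 𝕜}
    (hG : ∀ᶠ x in 𝓝 x₀, HasDerivAt G (k x) x) (hk : ContinuousAt k x₀) (hk₀ : k x₀ ≠ 0) :
    ∃ X : 𝕜 → 𝕜, X (G x₀) = x₀ ∧ ContinuousAt X (G x₀) ∧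
      ∀ᶠ s in 𝓝 (G x₀), G (X s) = s ∧ HasDerivAt X (k (X s))⁻¹ s := by
  have hstrict := (hasStrictDerivAt_of_hasDerivAt_of_continuousAt hG hk).hasStrictFDerivAt_equiv hk₀
  let e := hstrict.toOpenPartialHomeomorph G
  have he : x₀ ∈ e.source := hstrict.mem_toOpenPartialHomeomorph_source
  have hX₀ : e.symm (G x₀) = x₀ := e.left_inv he
  have hX : ContinuousAt e.symm (G x₀) := e.continuousAt_symm (e.map_source he)
  refine ⟨e.symm, hX₀, hX, ?_⟩
  rw [ContinuousAt, hX₀] at hX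
  filter_upwards [e.open_target.mem_nhds (e.map_source he), hX.eventually hG,
    hX.eventually (hk.eventually_ne hk₀)] with s hs hGs hks
  exact ⟨e.right_inv hs, e.hasDerivAt_symm hs hks hGs⟩

end Calculus

section MorseCoordinate

/-- The Morse coordinate `s` of a potential `V` at a nondegenerate minimum `x₀`, characterised by
`V x = V x₀ + s ^ 2 / 2`. Writing the second difference quotient of `V` as an iterated `dslope`
makes the formula valid at `x₀` as well. -/
noncomputable def morseCoord (V : ℝ → ℝ) (x₀ x : ℝ) : ℝ :=
  (x - x₀) * √(2 * dslope (dslope V x₀) x₀ x)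

theorem morseCoord_self (V : ℝ → ℝ) (x₀ : ℝ) : morseCoord V x₀ x₀ = 0 := by
  simp [morseCoord]

theorem morseCoord_sq {V : ℝ → ℝ} {x₀ x : ℝ} (hV : deriv V x₀ = 0)
    (hx : 0 ≤ dslope (dslope V x₀) x₀ x) : morseCoord V x₀ x ^ 2 = 2 * (V x - V x₀) := by
  have hfst := sub_smul_dslope V x₀ x
  have hsnd := sub_smul_dslope (dslope V x₀) x₀ x
  rw [dslope_same, hV, sub_zero] at hsnd
  rw [morseCoord, mul_pow, Real.sq_sqrt (by positivity), ← hfst, ← hsnd]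
  simp only [smul_eq_mul]
  ring

variable {V F : ℝ → ℝ} {x₀ c : ℝ}

theorem dslope_dslope_self (hV : ∀ᶠ x in 𝓝 x₀, HasDerivAt V (F x) x)
    (hF : HasDerivAt F c x₀) : dslope (dslope V x₀) x₀ x₀ = c / 2 := by
  rw [dslope_same, (hasDerivAt_dslope_same hV hF).deriv]

theorem eventually_continuousAt_dslope_dslope (hV : ∀ᶠ x in 𝓝 x₀, HasDerivAt V (F x) x)
    (hF : HasDerivAt F c x₀) :
    ∀ᶠ x in 𝓝 x₀, ContinuousAt (dslope (dslope V x₀) x₀) x := by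
  filter_upwards [hV] with x hx
  exact continuousAt_dslope (hasDerivAt_dslope_same hV hF).differentiableAt
    (continuousAt_dslope hV.self_of_nhds.differentiableAt hx.continuousAt)

theorem eventually_dslope_dslope_pos (hV : ∀ᶠ x in 𝓝 x₀, HasDerivAt V (F x) x)
    (hF : HasDerivAt F c x₀) (hc : 0 < c) :
    ∀ᶠ x in 𝓝 x₀, 0 < dslope (dslope V x₀) x₀ x := by
  refine (eventually_continuousAt_dslope_dslope hV hF).self_of_nhds.eventually (lt_mem_nhds ?_)
  rw [dslope_dslope_self hV hF]
  positivity

/-- The derivative of `morseCoord V x₀` for a potential with `V' = F`. Off `x₀` it is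
`F x / morseCoord V x₀ x`; here a factor `x - x₀` is cancelled. -/
noncomputable def morseCoordDeriv (V F : ℝ → ℝ) (x₀ x : ℝ) : ℝ :=
  dslope F x₀ x / √(2 * dslope (dslope V x₀) x₀ x)

theorem morseCoordDeriv_self (hV : ∀ᶠ x in 𝓝 x₀, HasDerivAt V (F x) x)
    (hF : HasDerivAt F c x₀) : morseCoordDeriv V F x₀ x₀ = √c := by
  rw [morseCoordDeriv, dslope_same, hF.deriv, dslope_dslope_self hV hF,
    mul_div_cancel₀ _ two_ne_zero, Real.div_sqrt]

theorem eventually_continuousAt_morseCoordDeriv (hV : ∀ᶠ x in 𝓝 x₀, HasDerivAt V (F x) x)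
    (hF : HasDerivAt F c x₀) (hc : 0 < c) (hFc : ∀ᶠ x in 𝓝 x₀, ContinuousAt F x) :
    ∀ᶠ x in 𝓝 x₀, ContinuousAt (morseCoordDeriv V F x₀) x := by
  filter_upwards [hFc, eventually_continuousAt_dslope_dslope hV hF,
    eventually_dslope_dslope_pos hV hF hc] with x hFx hcont hpos
  exact (continuousAt_dslope hF.differentiableAt hFx).div (hcont.const_mul 2).sqrt (by positivity)

theorem mul_morseCoordDeriv {x : ℝ} (hF₀ : F x₀ = 0) (hx : 0 < dslope (dslope V x₀) x₀ x) :
    morseCoord V x₀ x * morseCoordDeriv V F x₀ x = F x := by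
  have hslope := sub_smul_dslope F x₀ x
  rw [hF₀, sub_zero, smul_eq_mul] at hslope
  rw [morseCoord, morseCoordDeriv, ← hslope]
  field_simp

theorem differentiableAt_morseCoord {x : ℝ} (hVx : DifferentiableAt ℝ V x) (hne : x ≠ x₀)
    (hx : 0 < dslope (dslope V x₀) x₀ x) : DifferentiableAt ℝ (morseCoord V x₀) x := by
  have hdslope : DifferentiableAt ℝ (dslope (dslope V x₀) x₀) x :=
    (differentiableAt_dslope_of_ne hne).2 ((differentiableAt_dslope_of_ne hne).2 hVx)
  exact (differentiableAt_id.sub_const x₀).mul ((hdslope.const_mul 2).sqrt (by positivity))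

theorem hasDerivAt_morseCoord_self (hV : ∀ᶠ x in 𝓝 x₀, HasDerivAt V (F x) x)
    (hF : HasDerivAt F c x₀) :
    HasDerivAt (morseCoord V x₀) (morseCoordDeriv V F x₀ x₀) x₀ := by
  have hcont := (eventually_continuousAt_dslope_dslope hV hF).self_of_nhds
  have h := hasDerivAt_sub_smul (hcont.const_mul 2).sqrt
  rwa [dslope_dslope_self hV hF, mul_div_cancel₀ _ two_ne_zero, ← morseCoordDeriv_self hV hF] at h

theorem eventually_hasDerivAt_morseCoord (hV : ∀ᶠ x in 𝓝 x₀, HasDerivAt V (F x) x)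
    (hF : HasDerivAt F c x₀) (hF₀ : F x₀ = 0) (hc : 0 < c) :
    ∀ᶠ x in 𝓝 x₀, HasDerivAt (morseCoord V x₀) (morseCoordDeriv V F x₀ x) x := by
  filter_upwards [hV, (eventually_dslope_dslope_pos hV hF hc).eventually_nhds] with x hVx hpos
  rcases eq_or_ne x x₀ with rfl | hne
  · exact hasDerivAt_morseCoord_self hV hF
  have hVd : deriv V x₀ = 0 := hV.self_of_nhds.deriv.trans hF₀
  have hG := (differentiableAt_morseCoord hVx.differentiableAt hne hpos.self_of_nhds).hasDerivAt
  have hsq : HasDerivAt (fun y => morseCoord V x₀ y ^ 2) (2 * F x) x :=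
    ((hVx.sub_const (V x₀)).const_mul 2).congr_of_eventuallyEq
      (hpos.mono fun y hy => morseCoord_sq hVd hy.le)
  have hprod : morseCoord V x₀ x * deriv (morseCoord V x₀) x
      = morseCoord V x₀ x * morseCoordDeriv V F x₀ x := by
    have hdouble : 2 * (morseCoord V x₀ x * deriv (morseCoord V x₀) x) = 2 * F x := by
      simpa [mul_assoc] using (hG.pow 2).unique hsq
    rw [mul_morseCoordDeriv hF₀ hpos.self_of_nhds]
    exact mul_left_cancel₀ two_ne_zero hdouble
  have hne' : morseCoord V x₀ x ≠ 0 :=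
    mul_ne_zero (sub_ne_zero.2 hne) (Real.sqrt_ne_zero'.2 (mul_pos two_pos hpos.self_of_nhds))
  exact hG.congr_deriv (mul_left_cancel₀ hne' hprod)

end MorseCoordinate

section Newton

/-- `X`, with derivative `X'`, parametrizes positions by the Morse coordinate at the parameter `s`:
differentiating `V (X s) = V x₀ + s ^ 2 / 2` gives the condition `F (X s) * X' s = s`, in which the
potential `V` of the force no longer appears. -/
structure IsMorseParamAt (F X X' : ℝ → ℝ) (s : ℝ) : Prop where
  hasDerivAt : HasDerivAt X (X' s) s
  continuousAt : ContinuousAt X' s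
  pos : 0 < X' s
  force_mul : F (X s) * X' s = s

theorem exists_eventually_isMorseParamAt {F : ℝ → ℝ} {x₀ c : ℝ}
    (hFc : ∀ᶠ x in 𝓝 x₀, ContinuousAt F x) (hF₀ : F x₀ = 0) (hF : HasDerivAt F c x₀) (hc : 0 < c) :
    ∃ X X' : ℝ → ℝ, X 0 = x₀ ∧ ∀ᶠ s in 𝓝 0, IsMorseParamAt F X X' s := by
  obtain ⟨V, hV⟩ := exists_eventually_hasDerivAt_of_eventually_continuousAt hFc
  have hk := eventually_continuousAt_morseCoordDeriv hV hF hc hFc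
  have hk₀ : 0 < morseCoordDeriv V F x₀ x₀ := by
    rw [morseCoordDeriv_self hV hF]
    positivity
  obtain ⟨X, hX₀, hXc, hX⟩ := exists_local_inverse_hasDerivAt
    (eventually_hasDerivAt_morseCoord hV hF hF₀ hc) hk.self_of_nhds hk₀.ne'
  rw [morseCoord_self] at hX₀ hXc hX
  refine ⟨X, fun s => (morseCoordDeriv V F x₀ (X s))⁻¹, hX₀, ?_⟩
  rw [ContinuousAt, hX₀] at hXc
  filter_upwards [hX, hXc.eventually hk, hXc.eventually (eventually_dslope_dslope_pos hV hF hc),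
    hXc.eventually (hk.self_of_nhds.eventually (lt_mem_nhds hk₀))]
    with s ⟨hinv, hderiv⟩ hcont hdslope hpos
  refine ⟨hderiv, (hcont.comp hderiv.continuousAt).inv₀ hpos.ne', inv_pos.2 hpos, ?_⟩
  rw [← mul_morseCoordDeriv hF₀ hdslope, hinv, mul_inv_cancel_right₀ hpos.ne']

/-- Separation of variables: `t = ∫ dθ / f θ`, and the time needed to advance by `L` does not
depend on the starting point. -/
theorem exists_hasDerivAt_comp_self_of_periodic {f : ℝ → ℝ} {L : ℝ} (hf : Continuous f)
    (hpos : ∀ x, 0 < f x) (hper : Function.Periodic f L) (hL : 0 < L) :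
    ∃ θ : ℝ → ℝ, θ 0 = 0 ∧ (∀ t, HasDerivAt θ (f (θ t)) t) ∧
      ∃ T, 0 < T ∧ ∀ t, θ (t + T) = θ t + L := by
  have hinv : Continuous fun x => (f x)⁻¹ := hf.inv₀ fun x => (hpos x).ne'
  have hinv_pos (x : ℝ) : 0 < (f x)⁻¹ := inv_pos.2 (hpos x)
  have hinv_per : Function.Periodic (fun x => (f x)⁻¹) L := fun x => congrArg (·⁻¹) (hper x)
  let τ (x : ℝ) : ℝ := ∫ y in 0..x, (f y)⁻¹
  have hτ (x : ℝ) : HasDerivAt τ (f x)⁻¹ x := (hinv.integral_hasStrictDerivAt 0 x).hasDerivAt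
  have hτ₀ : τ 0 = 0 := intervalIntegral.integral_same
  have hmono : StrictMono τ := strictMono_of_deriv_pos fun x => (hτ x).deriv ▸ hinv_pos x
  have hsurj : Function.Surjective τ :=
    (continuous_iff_continuousAt.2 fun x => (hτ x).continuousAt).surjective
      (hinv_per.tendsto_atTop_intervalIntegral_of_pos' (hinv.intervalIntegrable _ _) hinv_pos hL)
      (hinv_per.tendsto_atBot_intervalIntegral_of_pos' (hinv.intervalIntegrable _ _) hinv_pos hL)
  have hadd (x : ℝ) : τ (x + L) = τ x + τ L := by
    simpa using hinv_per.intervalIntegral_add_eq_add 0 x fun _ _ => hinv.intervalIntegrable _ _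
  let e : ℝ ≃o ℝ := hmono.orderIsoOfSurjective τ hsurj
  have hright (t : ℝ) : τ (e.symm t) = t := e.apply_symm_apply t
  have hleft (x : ℝ) : e.symm (τ x) = x := e.symm_apply_apply x
  refine ⟨e.symm, by simpa [hτ₀] using hleft 0, fun t => ?_, τ L, hτ₀ ▸ hmono hL, fun t => ?_⟩
  · simpa using (hτ (e.symm t)).of_local_left_inverse e.symm.continuous.continuousAt
      (hinv_pos _).ne' (.of_forall hright)
  · rw [← hleft (e.symm t + L), hadd, hright]

/-- `h` is a solution, for all times, of Newton's equation `h'' = -F h` for a particle of unit mass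
subject to the restoring force `F`. -/
structure IsNewtonSolution (F h : ℝ → ℝ) : Prop where
  differentiable : Differentiable ℝ h
  hasDerivAt_deriv : ∀ t, HasDerivAt (deriv h) (-F (h t)) t

theorem IsNewtonSolution.contDiff {F h : ℝ → ℝ} (hh : IsNewtonSolution F h)
    (hF : ∀ t, ContinuousAt F (h t)) : ContDiff ℝ 2 h := by
  have hderiv : ContDiff ℝ 1 (deriv h) := by
    refine contDiff_one_iff_deriv.2 ⟨fun t => (hh.hasDerivAt_deriv t).differentiableAt, ?_⟩
    rw [funext fun t => (hh.hasDerivAt_deriv t).deriv]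
    exact continuous_iff_continuousAt.2 fun t =>
      ((hF t).comp hh.differentiable.continuous.continuousAt).neg
  rw [← one_add_one_eq_two]
  exact contDiff_succ_iff_deriv.2 ⟨hh.differentiable, by simp, hderiv⟩

/-- The orbit `(s, h') = (r sin θ, r cos θ)` is a solution when `θ' = 1 / X' (r sin θ)`. -/
theorem exists_periodic_newtonSolution_of_isMorseParamAt {F X X' : ℝ → ℝ} {r : ℝ} (hr : 0 < r)
    (hX : ∀ s, |s| ≤ r → IsMorseParamAt F X X' s) :
    ∃ h : ℝ → ℝ, IsNewtonSolution F h ∧ (∀ t, ∃ s, |s| ≤ r ∧ X s = h t) ∧ deriv h 0 = r ∧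
      ∃ T, 0 < T ∧ Function.Periodic h T := by
  have hsin (θ : ℝ) : |r * sin θ| ≤ r := by
    rw [abs_mul, abs_of_pos hr]
    exact mul_le_of_le_one_right hr.le (abs_sin_le_one θ)
  have hparam (θ : ℝ) : IsMorseParamAt F X X' (r * sin θ) := hX _ (hsin θ)
  have hspeed : Continuous fun θ => (X' (r * sin θ))⁻¹ :=
    continuous_iff_continuousAt.2 fun θ => (ContinuousAt.comp (f := fun θ => r * sin θ)
      (hparam θ).continuousAt (by fun_prop)).inv₀ (hparam θ).pos.ne'
  obtain ⟨θ, hθ₀, hθ, T, hT, hθT⟩ := exists_hasDerivAt_comp_self_of_periodic hspeed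
    (fun θ => inv_pos.2 (hparam θ).pos) (L := 2 * π) (fun θ => by simp) two_pi_pos
  have hderiv (t : ℝ) : HasDerivAt (fun t => X (r * sin (θ t))) (r * cos (θ t)) t := by
    refine ((hparam (θ t)).hasDerivAt.comp t ((hθ t).sin.const_mul r)).congr_deriv ?_
    have hX' : X' (r * sin (θ t)) ≠ 0 := (hparam (θ t)).pos.ne'
    field_simp
  have hderiv₂ (t : ℝ) : HasDerivAt (fun t => r * cos (θ t)) (-F (X (r * sin (θ t)))) t := by
    refine ((hθ t).cos.const_mul r).congr_deriv ?_
    have hforce : F (X (r * sin (θ t))) = r * sin (θ t) / X' (r * sin (θ t)) :=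
      eq_div_of_mul_eq (hparam (θ t)).pos.ne' (hparam (θ t)).force_mul
    rw [hforce]
    ring
  have hderiv_eq : deriv (fun t => X (r * sin (θ t))) = fun t => r * cos (θ t) :=
    funext fun t => (hderiv t).deriv
  refine ⟨fun t => X (r * sin (θ t)), ⟨fun t => (hderiv t).differentiableAt, ?_⟩,
    fun t => ⟨_, hsin (θ t), rfl⟩, by simp [hderiv_eq, hθ₀], T, hT, fun t => by simp [hθT]⟩
  rwa [hderiv_eq]

theorem exists_periodic_newtonSolution {F : ℝ → ℝ} {x₀ c : ℝ} {U : Set ℝ}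
    (hFc : ∀ᶠ x in 𝓝 x₀, ContinuousAt F x) (hF₀ : F x₀ = 0) (hF : HasDerivAt F c x₀) (hc : 0 < c)
    (hU : U ∈ 𝓝 x₀) :
    ∃ h : ℝ → ℝ, IsNewtonSolution F h ∧ (∀ t, h t ∈ U) ∧ (¬ ∃ a, ∀ t, h t = a) ∧
      ∃ T, 0 < T ∧ Function.Periodic h T := by
  obtain ⟨X, X', hX₀, hX⟩ := exists_eventually_isMorseParamAt hFc hF₀ hF hc
  have hXU : ∀ᶠ s in 𝓝 0, X s ∈ U :=
    hX.self_of_nhds.hasDerivAt.continuousAt.eventually (hX₀.symm ▸ hU)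
  obtain ⟨r, hr, hball⟩ := Metric.nhds_basis_closedBall.eventually_iff.1 (hX.and hXU)
  simp only [mem_closedBall_zero_iff, Real.norm_eq_abs] at hball
  obtain ⟨h, hh, hrange, hderiv, hper⟩ :=
    exists_periodic_newtonSolution_of_isMorseParamAt hr fun s hs => (hball hs).1
  refine ⟨h, hh, fun t => ?_, ?_, hper⟩
  · obtain ⟨s, hs, hst⟩ := hrange t
    exact hst ▸ (hball hs).2
  · rintro ⟨a, ha⟩
    rw [funext ha, deriv_const] at hderiv
    exact hr.ne hderiv

end Newton

section PowerForce

theorem exists_pos_mul_rpow_sub_one_eq {a b p : ℝ} (ha : 0 < a) (hb : 0 < b) (hp : p ≠ 1) :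
    ∃ x : ℝ, 0 < x ∧ a * x ^ (p - 1) = b := by
  refine ⟨(b / a) ^ (p - 1)⁻¹, by positivity, ?_⟩
  rw [Real.rpow_inv_rpow (by positivity) (sub_ne_zero.2 hp), mul_div_cancel₀ _ ha.ne']

theorem continuousAt_linear_sub_rpow (a b p : ℝ) {x : ℝ} (hx : 0 < x) :
    ContinuousAt (fun x : ℝ => b * x - a * x ^ p) x :=
  (continuousAt_id.const_mul b).sub ((continuousAt_rpow_const x p (.inl hx.ne')).const_mul a)

theorem exists_pos_periodic_newtonSolution_linear_sub_rpow {a b p : ℝ} (ha : 0 < a) (hb : 0 < b)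
    (hp : p < 1) :
    ∃ h : ℝ → ℝ, IsNewtonSolution (fun x => b * x - a * x ^ p) h ∧ (∀ t, 0 < h t) ∧
      (¬ ∃ c, ∀ t, h t = c) ∧ ∃ T, 0 < T ∧ Function.Periodic h T := by
  obtain ⟨x₀, hx₀, hx₀b⟩ := exists_pos_mul_rpow_sub_one_eq ha hb hp.ne
  have hpos : ∀ᶠ x in 𝓝 x₀, 0 < x := lt_mem_nhds hx₀
  have hF₀ : b * x₀ - a * x₀ ^ p = 0 := by
    rw [← hx₀b, rpow_sub_one hx₀.ne']
    field_simp
    ring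
  have hF : HasDerivAt (fun x : ℝ => b * x - a * x ^ p) (b * (1 - p)) x₀ := by
    refine (((hasDerivAt_id x₀).const_mul b).sub
      ((hasDerivAt_rpow_const (.inl hx₀.ne')).const_mul a)).congr_deriv ?_
    rw [← hx₀b]
    ring
  exact exists_periodic_newtonSolution
    (hpos.mono fun x hx => continuousAt_linear_sub_rpow a b p hx) hF₀ hF
    (mul_pos hb (sub_pos.2 hp)) hpos

end PowerForce

theorem derdzinski_nonconstant_periodic_solution_iff_C_pos_general {a b p : ℝ} (ha : 0 < a)
    (hp : p < 1) :
    (∃ h : ℝ → ℝ,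
      ContDiff ℝ 2 h ∧
      (∀ t, 0 < h t) ∧
      (¬ ∃ c : ℝ, ∀ t, h t = c) ∧
      (∃ T : ℝ, 0 < T ∧ Function.Periodic h T) ∧
      (∀ t, deriv (deriv h) t - a * h t ^ p = -b * h t)) ↔ 0 < b := by
  constructor
  · rintro ⟨h, -, hpos, -, ⟨T, hT, hper⟩, hode⟩
    by_contra! hb
    refine not_periodic_of_deriv_deriv_pos (fun t => ?_) hT hper
    have hrpow : 0 < a * h t ^ p := mul_pos ha (rpow_pos_of_pos (hpos t) p)
    have hlin : 0 ≤ -b * h t := mul_nonneg (neg_nonneg.2 hb) (hpos t).le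
    linarith [hode t]
  · intro hb
    obtain ⟨h, hh, hpos, hconst, hper⟩ :=
      exists_pos_periodic_newtonSolution_linear_sub_rpow ha hb hp
    refine ⟨h, hh.contDiff fun t => continuousAt_linear_sub_rpow a b p (hpos t), hpos, hconst,
      hper, fun t => ?_⟩
    rw [(hh.hasDerivAt_deriv t).deriv]
    ring

/-- Let `n ≥ 3` be an integer and `R > 0`. Derdzinski's equation
`h'' - (nR/(4(n-1))) h^(1-4/n) = -(n/4) C h` admits a nonconstant positive periodic
solution if and only if `C > 0`. -/
theorem derdzinski_nonconstant_periodic_solution_iff_C_pos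
    (n : ℕ) (hn : 3 ≤ n) (R C : ℝ) (hR : 0 < R) :
    (∃ h : ℝ → ℝ,
      ContDiff ℝ 2 h ∧
      (∀ t, 0 < h t) ∧
      (¬ ∃ a : ℝ, ∀ t, h t = a) ∧
      (∃ T : ℝ, 0 < T ∧ Function.Periodic h T) ∧
      (∀ t, deriv (deriv h) t
          - ((n : ℝ) * R / (4 * ((n : ℝ) - 1))) * h t ^ (1 - 4 / (n : ℝ))
          = -((n : ℝ) / 4) * C * h t)) ↔ 0 < C := by
  have hn' : (1 : ℝ) < n := by exact_mod_cast (show 1 < n by lia)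
  have ha : 0 < (n : ℝ) * R / (4 * ((n : ℝ) - 1)) :=
    div_pos (by positivity) (mul_pos four_pos (sub_pos.2 hn'))
  have hp : 1 - 4 / (n : ℝ) < 1 := sub_lt_self 1 (by positivity)
  have hb : 0 < (n : ℝ) / 4 * C ↔ 0 < C := mul_pos_iff_of_pos_left (by positivity)
  simpa only [neg_mul, hb] using
    derdzinski_nonconstant_periodic_solution_iff_C_pos_general (b := (n : ℝ) / 4 * C) ha hp
end

section
/- Let n ≥ 3 be an integer, R > 0, C > 0 real constants, and T > 0. If h₁ and h₂ are two positive T-periodic solutions of h'' - (nR/(4(n-1))) h^(1-4/n) = -(n/4) C h having the same energy, i.e. (1/2) h₁'² + V(h₁) and (1/2) h₂'² + V(h₂) are equal to the same constant where V(u) = (nC/8) u² - (n²R/(8(n-1)(n-2))) u^(2-4/n), then h₂ is a translate of h₁: there exists s ∈ ℝ such that h₂(t) = h₁(t+s) for all t ∈ ℝ. -/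
open Real

/-!
The equation reads `h'' = -k(h) h` with `k(u) = nC/4 - nR/(4(n-1)) u^(-4/n)`: it describes a spring
whose stiffness `k` increases with the displacement. A positive motion of such a spring turns back
at some displacement where `k ≥ 0`: as long as `k < 0` an outgoing motion accelerates, and once
`k > 0` it meets a retarding force bounded away from zero. The potential is strictly increasing
where `k ≥ 0`, so the energy determines the displacement at this turning point. Two solutions of
the same energy therefore have, at suitable times, the same position and the same velocity `0`, and
they are translates by uniqueness for the initial value problem.
-/

open Set Filter Topology

section Calculus

theorem ODE_solution_unique_of_locallyLipschitzOn {F : Type*} [NormedAddCommGroup F]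
    [NormedSpace ℝ F] {v : F → F} {U : Set F} (hv : LocallyLipschitzOn U v) {γ₁ γ₂ : ℝ → F}
    (hγ₁ : ∀ t, HasDerivAt γ₁ (v (γ₁ t)) t) (hU₁ : ∀ t, γ₁ t ∈ U)
    (hγ₂ : ∀ t, HasDerivAt γ₂ (v (γ₂ t)) t) (hU₂ : ∀ t, γ₂ t ∈ U)
    {t₀ : ℝ} (h₀ : γ₁ t₀ = γ₂ t₀) : γ₁ = γ₂ := by
  funext t
  obtain ⟨r, hr⟩ : ∃ r, r > max |t₀| |t| := exists_gt _
  obtain ⟨ht₀, ht⟩ := max_lt_iff.1 hr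
  let I := Icc (-r) r
  have hcompact : IsCompact (γ₁ '' I ∪ γ₂ '' I) :=
    (isCompact_Icc.image_of_continuousOn (HasDerivAt.continuousOn fun s _ ↦ hγ₁ s)).union
      (isCompact_Icc.image_of_continuousOn (HasDerivAt.continuousOn fun s _ ↦ hγ₂ s))
  have hsub : γ₁ '' I ∪ γ₂ '' I ⊆ U :=
    union_subset (image_subset_iff.2 fun s _ ↦ hU₁ s) (image_subset_iff.2 fun s _ ↦ hU₂ s)
  obtain ⟨K, hK⟩ := (hv.mono hsub).exists_lipschitzOnWith_of_compact hcompact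
  exact ODE_solution_unique_of_mem_Ioo (v := fun _ ↦ v) (fun _ _ ↦ hK) (abs_lt.1 ht₀)
    (fun s hs ↦ ⟨hγ₁ s, .inl ⟨s, Ioo_subset_Icc_self hs, rfl⟩⟩)
    (fun s hs ↦ ⟨hγ₂ s, .inr ⟨s, Ioo_subset_Icc_self hs, rfl⟩⟩) h₀ (abs_lt.1 ht)

theorem locallyLipschitzOn_phaseField {f : ℝ → ℝ} {U : Set ℝ} (hf : LocallyLipschitzOn U f) :
    LocallyLipschitzOn (U ×ˢ univ) fun z : ℝ × ℝ ↦ (z.2, f z.1) := by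
  rintro z ⟨hz, -⟩
  obtain ⟨K, N, hN, hK⟩ := hf hz
  have hfst : Tendsto Prod.fst (𝓝[U ×ˢ univ] z) (𝓝[U] z.1) :=
    continuous_fst.continuousWithinAt.tendsto_nhdsWithin fun _ hw ↦ hw.1
  exact ⟨_, _, hfst hN, LipschitzWith.prod_snd.lipschitzOnWith.prodMk
    (hK.comp LipschitzWith.prod_fst.lipschitzOnWith fun _ hw ↦ hw)⟩

theorem tendsto_atTop_of_le_deriv {y : ℝ → ℝ} {a δ : ℝ} (hy : ContinuousOn y (Ici a))
    (hδ : 0 < δ) (hderiv : ∀ t > a, δ ≤ deriv y t) : Tendsto y atTop atTop := by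
  have hlower : ∀ t ∈ Ici a, y a + δ * (t - a) ≤ y t := fun t ht ↦ by
    have := (convex_Ici a).mul_sub_le_image_sub_of_le_deriv (C := δ) hy
      (fun s hs ↦ (differentiableAt_of_deriv_ne_zero
        (hδ.trans_le (hderiv s (by simpa using hs))).ne').differentiableWithinAt)
      (fun s hs ↦ hderiv s (by simpa using hs)) a self_mem_Ici t ht ht
    linarith
  refine tendsto_atTop_mono' atTop (eventually_ge_atTop a |>.mono hlower) ?_
  exact tendsto_atTop_add_const_left _ _
    ((tendsto_atTop_add_const_right _ _ tendsto_id).const_mul_atTop hδ)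

theorem pos_of_deriv_pos_of_eq_zero {y : ℝ → ℝ} (hy : Differentiable ℝ y)
    (hzero : ∀ t, y t = 0 → 0 < deriv y t) {a t : ℝ} (ha : 0 ≤ y a) (hat : a < t) : 0 < y t := by
  have hnonneg : ∀ b, ∀ s ∈ Icc a b, 0 ≤ y s := fun b ↦
    image_le_of_deriv_right_lt_deriv_boundary (f := fun _ ↦ 0) (f' := fun _ ↦ 0)
      continuousOn_const (fun _ _ ↦ hasDerivWithinAt_const ..) ha (fun s ↦ (hy s).hasDerivAt)
      (fun s _ hs ↦ hzero s hs.symm)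
  refine (hnonneg t t ⟨hat.le, le_rfl⟩).lt_of_ne' fun ht ↦ ?_
  have hmin : IsLocalMin y t := by
    filter_upwards [Ioi_mem_nhds hat] with s hs
    exact ht.trans_le (hnonneg s s ⟨le_of_lt hs, le_rfl⟩)
  exact (hzero t ht).ne' hmin.deriv_eq_zero

end Calculus

/-- The function `x : ℝ → ℝ` is a motion under the force `f`: it solves Newton's equation
`x'' = f(x)` for all times. The derivatives are required to exist because `deriv` is `0` where they
do not. -/
structure IsMotion (f x : ℝ → ℝ) : Prop where
  hasDerivAt (t : ℝ) : HasDerivAt x (deriv x t) t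
  hasDerivAt_deriv (t : ℝ) : HasDerivAt (deriv x) (f (x t)) t

/-- The total energy of the motion `x` in the potential `V`, at time `t`. -/
noncomputable def mechanicalEnergy (V x : ℝ → ℝ) (t : ℝ) : ℝ :=
  1 / 2 * deriv x t ^ 2 + V (x t)

/-- The restoring force of a spring with rest position `0` and stiffness `k u` at displacement
`u`. -/
def springForce (k : ℝ → ℝ) (u : ℝ) : ℝ := -(k u * u)

theorem springForce_pos {k : ℝ → ℝ} {u : ℝ} (hk : k u < 0) (hu : 0 < u) : 0 < springForce k u :=
  neg_pos.2 (mul_neg_of_neg_of_pos hk hu)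

theorem strictMonoOn_potential {k V : ℝ → ℝ} (hk : StrictMonoOn k (Ioi 0))
    (hV : ∀ u > 0, HasDerivAt V (-springForce k u) u) :
    StrictMonoOn V {u | 0 < u ∧ 0 ≤ k u} := by
  rintro u ⟨hu, hku⟩ w - huw
  have hmono : StrictMonoOn V (Icc u w) :=
    strictMonoOn_of_deriv_pos (convex_Icc u w)
      (HasDerivAt.continuousOn fun y hy ↦ hV y (hu.trans_le hy.1)) fun y hy ↦ by
        rw [interior_Icc] at hy
        have hy₀ : 0 < y := hu.trans hy.1
        rw [(hV y hy₀).deriv, springForce, neg_neg]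
        exact mul_pos (hku.trans_lt (hk hu hy₀ hy.1)) hy₀
  exact hmono (left_mem_Icc.2 huw.le) (right_mem_Icc.2 huw.le) huw

namespace IsMotion

section Force

variable {f x x₁ x₂ : ℝ → ℝ} {U : Set ℝ}

theorem of_contDiff (hx : ContDiff ℝ 2 x) (h : ∀ t, deriv (deriv x) t = f (x t)) :
    IsMotion f x where
  hasDerivAt t := (hx.differentiable two_ne_zero t).hasDerivAt
  hasDerivAt_deriv t := by
    have hx' : ContDiff ℝ 1 (deriv x) := hx.deriv' (n := 1)
    exact h t ▸ (hx'.differentiable one_ne_zero t).hasDerivAt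

theorem continuous (hx : IsMotion f x) : Continuous x :=
  continuous_iff_continuousAt.2 fun t ↦ (hx.hasDerivAt t).continuousAt

theorem differentiable_deriv (hx : IsMotion f x) : Differentiable ℝ (deriv x) :=
  fun t ↦ (hx.hasDerivAt_deriv t).differentiableAt

theorem deriv_deriv (hx : IsMotion f x) (t : ℝ) : deriv (deriv x) t = f (x t) :=
  (hx.hasDerivAt_deriv t).deriv

theorem comp_add_const (hx : IsMotion f x) (s : ℝ) : IsMotion f fun t ↦ x (t + s) where
  hasDerivAt t := by
    simpa only [deriv_comp_add_const] using (hx.hasDerivAt (t + s)).comp_add_const t s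
  hasDerivAt_deriv t := by
    rw [funext fun r ↦ deriv_comp_add_const (f := x) (a := s) (x := r)]
    exact (hx.hasDerivAt_deriv (t + s)).comp_add_const t s

theorem comp_neg (hx : IsMotion f x) : IsMotion f fun t ↦ x (-t) where
  hasDerivAt t := by
    simpa [deriv_comp_neg, Function.comp_def] using (hx.hasDerivAt (-t)).scomp t (hasDerivAt_neg t)
  hasDerivAt_deriv t := by
    rw [funext fun r ↦ deriv_comp_neg (f := x) (x := r)]
    simpa [Function.comp_def] using
      ((hx.hasDerivAt_deriv (-t)).scomp t (hasDerivAt_neg t)).fun_neg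

theorem hasDerivAt_phase (hx : IsMotion f x) (t : ℝ) :
    HasDerivAt (fun t ↦ (x t, deriv x t)) (deriv x t, f (x t)) t :=
  (hx.hasDerivAt t).prodMk (hx.hasDerivAt_deriv t)

theorem eq_of_eq_at (hf : LocallyLipschitzOn U f)
    (hx₁ : IsMotion f x₁) (hU₁ : ∀ t, x₁ t ∈ U) (hx₂ : IsMotion f x₂) (hU₂ : ∀ t, x₂ t ∈ U)
    {t₀ : ℝ} (hpos : x₁ t₀ = x₂ t₀) (hvel : deriv x₁ t₀ = deriv x₂ t₀) : x₁ = x₂ := by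
  have hphase := ODE_solution_unique_of_locallyLipschitzOn (locallyLipschitzOn_phaseField hf)
    hx₁.hasDerivAt_phase (fun t ↦ ⟨hU₁ t, mem_univ _⟩)
    hx₂.hasDerivAt_phase (fun t ↦ ⟨hU₂ t, mem_univ _⟩) (Prod.ext hpos hvel)
  exact funext fun t ↦ congrArg Prod.fst (congrFun hphase t)

theorem exists_translate_of_eq_at (hf : LocallyLipschitzOn U f)
    (hx₁ : IsMotion f x₁) (hU₁ : ∀ t, x₁ t ∈ U) (hx₂ : IsMotion f x₂) (hU₂ : ∀ t, x₂ t ∈ U)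
    {t₁ t₂ : ℝ} (hpos : x₁ t₁ = x₂ t₂) (hvel : deriv x₁ t₁ = deriv x₂ t₂) :
    ∃ s, ∀ t, x₂ t = x₁ (t + s) := by
  refine ⟨t₁ - t₂, fun t ↦ congrFun (eq_of_eq_at (t₀ := t₂) hf hx₂ hU₂
    (hx₁.comp_add_const (t₁ - t₂)) (fun t ↦ hU₁ _) ?_ ?_) t⟩
  · rw [add_sub_cancel, hpos]
  · rw [deriv_comp_add_const, add_sub_cancel, hvel]

end Force

section HardeningSpring

variable {k V x x₁ x₂ : ℝ → ℝ} {u₀ E : ℝ}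

theorem exists_stiffness_nonneg_of_deriv_pos (hk : StrictMonoOn k (Ioi 0))
    (hu₀ : 0 < u₀) (hku₀ : 0 ≤ k u₀) (hx : IsMotion (springForce k) x) (hpos : ∀ t, 0 < x t) {a : ℝ}
    (hv : ∀ t > a, 0 < deriv x t) : ∃ t > a, 0 ≤ k (x t) := by
  by_contra! hneg
  have hmono : StrictMonoOn (deriv x) (Ici (a + 1)) :=
    strictMonoOn_of_deriv_pos (convex_Ici _) hx.differentiable_deriv.continuous.continuousOn
      fun t ht ↦ by
        rw [interior_Ici, mem_Ioi] at ht
        rw [hx.deriv_deriv]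
        exact springForce_pos (hneg t ((lt_add_one a).trans ht)) (hpos t)
  have hescape : Tendsto x atTop atTop :=
    tendsto_atTop_of_le_deriv hx.continuous.continuousOn (hv (a + 1) (lt_add_one a))
      fun t ht ↦ hmono.monotoneOn self_mem_Ici ht.le ht.le
  obtain ⟨t, hut, hat⟩ := ((hescape.eventually_ge_atTop u₀).and (eventually_gt_atTop a)).exists
  exact (hneg t hat).not_ge (hku₀.trans (hk.monotoneOn hu₀ (hpos t) hut))

theorem exists_deriv_nonpos_of_stiffness_nonneg (hk : StrictMonoOn k (Ioi 0))
    (hx : IsMotion (springForce k) x) (hpos : ∀ t, 0 < x t) {a : ℝ} (ha : 0 ≤ k (x a)) :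
    ∃ t ≥ a, deriv x t ≤ 0 := by
  by_contra! hv
  have hmono : StrictMonoOn x (Ici a) :=
    strictMonoOn_of_deriv_pos (convex_Ici a) hx.continuous.continuousOn
      fun t ht ↦ hv t (interior_subset ht)
  have hb : a + 1 ∈ Ici a := (lt_add_one a).le
  have hkb : 0 < k (x (a + 1)) :=
    ha.trans_lt (hk (hpos _) (hpos _) (hmono self_mem_Ici hb (lt_add_one a)))
  have hretard : ∀ t > a + 1, k (x (a + 1)) * x (a + 1) ≤ deriv (fun s ↦ -deriv x s) t := by
    intro t ht
    have hxt : x (a + 1) ≤ x t := hmono.monotoneOn hb (hb.trans ht.le) ht.le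
    have hkt : k (x (a + 1)) ≤ k (x t) := hk.monotoneOn (hpos _) (hpos _) hxt
    rw [deriv.fun_neg, hx.deriv_deriv, springForce, neg_neg]
    exact mul_le_mul hkt hxt (hpos _).le (hkb.le.trans hkt)
  have hreverse : Tendsto (fun t ↦ -deriv x t) atTop atTop :=
    tendsto_atTop_of_le_deriv hx.differentiable_deriv.continuous.neg.continuousOn
      (mul_pos hkb (hpos _)) hretard
  obtain ⟨t, hvt, hat⟩ := ((hreverse.eventually_ge_atTop 0).and (eventually_ge_atTop a)).exists
  exact (hv t hat).not_ge (neg_nonneg.1 hvt)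

theorem exists_turning_point (hk : StrictMonoOn k (Ioi 0)) (hu₀ : 0 < u₀) (hku₀ : 0 ≤ k u₀)
    (hx : IsMotion (springForce k) x) (hpos : ∀ t, 0 < x t) :
    ∃ t, deriv x t = 0 ∧ 0 ≤ k (x t) := by
  wlog hv₀ : 0 ≤ deriv x 0 generalizing x
  · obtain ⟨t, hvt, hkt⟩ := this hx.comp_neg (fun t ↦ hpos (-t)) (by
      rw [deriv_comp_neg, neg_zero]; exact neg_nonneg.2 (not_le.1 hv₀).le)
    exact ⟨-t, by rwa [deriv_comp_neg, neg_eq_zero] at hvt, hkt⟩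
  by_contra! hneg
  have hv : ∀ t > 0, 0 < deriv x t := fun t ht ↦
    pos_of_deriv_pos_of_eq_zero hx.differentiable_deriv (fun s hs ↦ by
      rw [hx.deriv_deriv]
      exact springForce_pos (hneg s hs) (hpos s)) hv₀ ht
  obtain ⟨a, ha, hka⟩ := exists_stiffness_nonneg_of_deriv_pos hk hu₀ hku₀ hx hpos hv
  obtain ⟨t, hat, hvt⟩ := exists_deriv_nonpos_of_stiffness_nonneg hk hx hpos hka
  exact (hv t (ha.trans_le hat)).not_ge hvt

theorem exists_translate_of_mechanicalEnergy_eq (hk : StrictMonoOn k (Ioi 0))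
    (hforce : LocallyLipschitzOn (Ioi 0) (springForce k))
    (hV : ∀ u > 0, HasDerivAt V (-springForce k u) u) (hu₀ : 0 < u₀) (hku₀ : 0 ≤ k u₀)
    (hx₁ : IsMotion (springForce k) x₁) (hpos₁ : ∀ t, 0 < x₁ t)
    (hx₂ : IsMotion (springForce k) x₂) (hpos₂ : ∀ t, 0 < x₂ t)
    (hE₁ : ∀ t, mechanicalEnergy V x₁ t = E) (hE₂ : ∀ t, mechanicalEnergy V x₂ t = E) :
    ∃ s, ∀ t, x₂ t = x₁ (t + s) := by
  obtain ⟨t₁, hv₁, hk₁⟩ := exists_turning_point hk hu₀ hku₀ hx₁ hpos₁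
  obtain ⟨t₂, hv₂, hk₂⟩ := exists_turning_point hk hu₀ hku₀ hx₂ hpos₂
  have hVeq : V (x₁ t₁) = V (x₂ t₂) := by
    simpa [mechanicalEnergy, hv₁, hv₂] using (hE₁ t₁).trans (hE₂ t₂).symm
  have hturn : x₁ t₁ = x₂ t₂ :=
    (strictMonoOn_potential hk hV).injOn ⟨hpos₁ t₁, hk₁⟩ ⟨hpos₂ t₂, hk₂⟩ hVeq
  exact exists_translate_of_eq_at hforce hx₁ hpos₁ hx₂ hpos₂ hturn (hv₁.trans hv₂.symm)

end HardeningSpring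

end IsMotion

/-- The stiffness for which `x'' = springForce _ x` becomes `x'' = b x^(1-q) - c x` on positive
functions `x`; Derdzinski's equation is the case `b = nR/(4(n-1))`, `c = nC/4`, `q = 4/n`. -/
noncomputable def powerStiffness (b c q u : ℝ) : ℝ := c - b * u ^ (-q)

/-- The potential of the force `springForce (powerStiffness b c q)` for `q ≠ 2`; at `q = 2` the
division by `0` drops the second term, which should be logarithmic. -/
noncomputable def powerPotential (b c q u : ℝ) : ℝ := c / 2 * u ^ 2 - b / (2 - q) * u ^ (2 - q)

section PowerLaw

variable {b c q u : ℝ}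

theorem springForce_powerStiffness (hu : 0 < u) :
    springForce (powerStiffness b c q) u = b * u ^ (1 - q) - c * u := by
  have hpow : u ^ (1 - q) = u ^ (-q) * u := by
    rw [sub_eq_neg_add, rpow_add_one hu.ne']
  rw [springForce, powerStiffness, hpow]
  ring

theorem strictMonoOn_powerStiffness (hb : 0 < b) (hq : 0 < q) :
    StrictMonoOn (powerStiffness b c q) (Ioi 0) := fun _ hu _ _ huw ↦
  sub_lt_sub_left
    (mul_lt_mul_of_pos_left (rpow_lt_rpow_of_neg hu huw (neg_neg_of_pos hq)) hb) c

theorem exists_powerStiffness_nonneg (hc : 0 < c) (hq : 0 < q) :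
    ∃ u > 0, 0 ≤ powerStiffness b c q u := by
  have hlim : Tendsto (powerStiffness b c q) atTop (𝓝 c) := by
    simpa [funext_iff, powerStiffness, Function.comp_def] using!
      ((tendsto_rpow_neg_atTop hq).const_mul b).const_sub c
  obtain ⟨u, hu, hk⟩ := ((eventually_gt_atTop 0).and (hlim.eventually_const_lt hc)).exists
  exact ⟨u, hu, hk.le⟩

theorem locallyLipschitzOn_springForce_powerStiffness :
    LocallyLipschitzOn (Ioi 0) (springForce (powerStiffness b c q)) := by
  refine ContDiffOn.locallyLipschitzOn (convex_Ioi 0) fun u hu ↦ ContDiffAt.contDiffWithinAt ?_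
  have hpow : ContDiffAt ℝ 1 (fun u : ℝ ↦ u ^ (-q)) u :=
    contDiffAt_rpow_const_of_ne (ne_of_gt hu)
  exact ((contDiffAt_const.sub (contDiffAt_const.mul hpow)).mul contDiffAt_id).neg

theorem hasDerivAt_powerPotential (hq : q ≠ 2) (hu : 0 < u) :
    HasDerivAt (powerPotential b c q) (-springForce (powerStiffness b c q) u) u := by
  have hq' : 2 - q ≠ 0 := sub_ne_zero.2 hq.symm
  convert! ((hasDerivAt_pow 2 u).const_mul (c / 2)).sub
    ((hasDerivAt_rpow_const (p := 2 - q) (.inl hu.ne')).const_mul (b / (2 - q))) using 1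
  rw [springForce_powerStiffness hu, show 2 - q - 1 = 1 - q by ring]
  field_simp
  ring

theorem isMotion_powerStiffness {x : ℝ → ℝ} (hx : ContDiff ℝ 2 x) (hpos : ∀ t, 0 < x t)
    (hode : ∀ t, deriv (deriv x) t = b * x t ^ (1 - q) - c * x t) :
    IsMotion (springForce (powerStiffness b c q)) x :=
  .of_contDiff hx fun t ↦ by rw [hode, springForce_powerStiffness (hpos t)]

end PowerLaw

theorem powerPotential_derdzinski {n R C u : ℝ} (hn : 1 < n) (hn₂ : n ≠ 2) :
    powerPotential (n * R / (4 * (n - 1))) (n / 4 * C) (4 / n) u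
      = n * C / 8 * u ^ 2 - n ^ 2 * R / (8 * (n - 1) * (n - 2)) * u ^ (2 - 4 / n) := by
  have hn₀ : n ≠ 0 := (one_pos.trans hn).ne'
  have hn₁ : n - 1 ≠ 0 := (sub_pos.2 hn).ne'
  have hn₂' : n - 2 ≠ 0 := sub_ne_zero.2 hn₂
  have hexp : 2 - 4 / n = 2 * (n - 2) / n := by field_simp; ring
  have hcoeff : n * R / (4 * (n - 1)) / (2 - 4 / n)
      = n ^ 2 * R / (8 * (n - 1) * (n - 2)) := by
    rw [hexp]
    field_simp
    ring
  rw [powerPotential, hcoeff]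
  ring

theorem derdzinski_same_energy_implies_translate_general
    {n R C : ℝ} (hn : 1 < n) (hn₂ : n ≠ 2) (hR : 0 < R) (hC : 0 < C) {h₁ h₂ : ℝ → ℝ}
    (hsm₁ : ContDiff ℝ 2 h₁) (hsm₂ : ContDiff ℝ 2 h₂)
    (hpos₁ : ∀ t, 0 < h₁ t) (hpos₂ : ∀ t, 0 < h₂ t)
    (hode₁ : ∀ t, deriv (deriv h₁) t - n * R / (4 * (n - 1)) * h₁ t ^ (1 - 4 / n)
      = -(n / 4) * C * h₁ t)
    (hode₂ : ∀ t, deriv (deriv h₂) t - n * R / (4 * (n - 1)) * h₂ t ^ (1 - 4 / n)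
      = -(n / 4) * C * h₂ t)
    {E : ℝ}
    (hE₁ : ∀ t, 1 / 2 * deriv h₁ t ^ 2 + n * C / 8 * h₁ t ^ 2
      - n ^ 2 * R / (8 * (n - 1) * (n - 2)) * h₁ t ^ (2 - 4 / n) = E)
    (hE₂ : ∀ t, 1 / 2 * deriv h₂ t ^ 2 + n * C / 8 * h₂ t ^ 2
      - n ^ 2 * R / (8 * (n - 1) * (n - 2)) * h₂ t ^ (2 - 4 / n) = E) :
    ∃ s, ∀ t, h₂ t = h₁ (t + s) := by
  have hq : 0 < 4 / n := div_pos four_pos (one_pos.trans hn)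
  have hq₂ : 4 / n ≠ 2 := fun h ↦ hn₂ (by field_simp at h; linarith)
  have hb : 0 < n * R / (4 * (n - 1)) := by
    have := sub_pos.2 hn
    positivity
  have hc : 0 < n / 4 * C := by positivity
  obtain ⟨u₀, hu₀, hku₀⟩ := exists_powerStiffness_nonneg (b := n * R / (4 * (n - 1))) hc hq
  exact IsMotion.exists_translate_of_mechanicalEnergy_eq (E := E)
    (strictMonoOn_powerStiffness hb hq) locallyLipschitzOn_springForce_powerStiffness
    (fun _ ↦ hasDerivAt_powerPotential hq₂) hu₀ hku₀
    (isMotion_powerStiffness hsm₁ hpos₁ fun t ↦ by linarith [hode₁ t]) hpos₁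
    (isMotion_powerStiffness hsm₂ hpos₂ fun t ↦ by linarith [hode₂ t]) hpos₂
    (fun t ↦ by rw [mechanicalEnergy, powerPotential_derdzinski hn hn₂, ← hE₁ t]; ring)
    (fun t ↦ by rw [mechanicalEnergy, powerPotential_derdzinski hn hn₂, ← hE₂ t]; ring)

/-- Two positive `T`-periodic solutions of Derdzinski's equation
`h'' - (nR/(4(n-1))) h^(1-4/n) = -(n/4) C h` with the same energy
`(1/2) h'² + (nC/8) h² - (n²R/(8(n-1)(n-2))) h^(2-4/n)` are translates of each other. -/
theorem derdzinski_same_energy_implies_translate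
    (n : ℕ) (hn : 3 ≤ n) (R C T : ℝ) (hR : 0 < R) (hC : 0 < C) (hT : 0 < T)
    (h₁ h₂ : ℝ → ℝ)
    (hsm₁ : ContDiff ℝ 2 h₁) (hsm₂ : ContDiff ℝ 2 h₂)
    (hpos₁ : ∀ t, 0 < h₁ t) (hpos₂ : ∀ t, 0 < h₂ t)
    (hper₁ : Function.Periodic h₁ T) (hper₂ : Function.Periodic h₂ T)
    (hode₁ : ∀ t, deriv (deriv h₁) t
        - ((n : ℝ) * R / (4 * ((n : ℝ) - 1))) * h₁ t ^ (1 - 4 / (n : ℝ))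
        = -((n : ℝ) / 4) * C * h₁ t)
    (hode₂ : ∀ t, deriv (deriv h₂) t
        - ((n : ℝ) * R / (4 * ((n : ℝ) - 1))) * h₂ t ^ (1 - 4 / (n : ℝ))
        = -((n : ℝ) / 4) * C * h₂ t)
    (E : ℝ)
    (hE₁ : ∀ t, (1 / 2) * (deriv h₁ t) ^ 2
        + ((n : ℝ) * C / 8) * h₁ t ^ 2
        - ((n : ℝ) ^ 2 * R / (8 * ((n : ℝ) - 1) * ((n : ℝ) - 2))) * h₁ t ^ (2 - 4 / (n : ℝ))
        = E)
    (hE₂ : ∀ t, (1 / 2) * (deriv h₂ t) ^ 2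
        + ((n : ℝ) * C / 8) * h₂ t ^ 2
        - ((n : ℝ) ^ 2 * R / (8 * ((n : ℝ) - 1) * ((n : ℝ) - 2))) * h₂ t ^ (2 - 4 / (n : ℝ))
        = E) :
    ∃ s : ℝ, ∀ t : ℝ, h₂ t = h₁ (t + s) :=
  derdzinski_same_energy_implies_translate_general (by norm_cast; lia) (by norm_cast; lia) hR hC
    hsm₁ hsm₂ hpos₁ hpos₂ hode₁ hode₂ hE₁ hE₂
end

section
/- Let n ≥ 4 be an integer and g(u) = u - u^(1-4/n) for u > 0, so that g'(u) = 1 - (1-4/n) u^(-4/n) and g''(u) = (4/n)(1-4/n) u^(-1-4/n). Then for all u > 0 one has g''(u) ≥ 0 and Δ(u) := (u-1)·[g'(u) g''(1) - g'(1) g''(u)] ≥ 0. -/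
open Real

/-!
For `0 ≤ a ≤ 1` the function `g(u) = u - u^(1-a)` has increasing `g'` and decreasing `g''` on
`(0, ∞)`, both nonnegative at `1`. Since
`g'(u) g''(1) - g'(1) g''(u) = (g'(u) - g'(1)) g''(1) + g'(1) (g''(1) - g''(u))`,
the bracket in the discriminant is `≥ 0` for `u ≥ 1` and `≤ 0` for `u ≤ 1`.
-/

section Discriminant

variable {R : Type*} [Ring R]

/-- The Chow–Wang discriminant `(u - c) (g'(u) g''(c) - g'(c) g''(u))` of a function `g` with
respect to an equilibrium `c`. The arguments `g'` and `g''` stand for the first two derivatives of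
`g`, so that explicit formulas for them can be supplied. -/
def chowWangDiscriminant (g' g'' : R → R) (c u : R) : R :=
  (u - c) * (g' u * g'' c - g' c * g'' u)

variable [LinearOrder R] [IsOrderedRing R]

theorem chowWangDiscriminant_nonneg_of_monotoneOn_of_antitoneOn {g' g'' : R → R} {s : Set R}
    {c u : R} (hmono : MonotoneOn g' s) (hanti : AntitoneOn g'' s) (hc : c ∈ s) (hu : u ∈ s)
    (hg' : 0 ≤ g' c) (hg'' : 0 ≤ g'' c) : 0 ≤ chowWangDiscriminant g' g'' c u := by
  have hsplit : g' u * g'' c - g' c * g'' u =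
      (g' u - g' c) * g'' c + g' c * (g'' c - g'' u) := by
    rw [sub_mul, mul_sub, sub_add_sub_cancel]
  rw [chowWangDiscriminant, hsplit]
  rcases le_total c u with hcu | huc
  · have hincr : 0 ≤ g' u - g' c := sub_nonneg.2 (hmono hc hu hcu)
    have hdecr : 0 ≤ g'' c - g'' u := sub_nonneg.2 (hanti hc hu hcu)
    exact mul_nonneg (sub_nonneg.2 hcu)
      (add_nonneg (mul_nonneg hincr hg'') (mul_nonneg hg' hdecr))
  · have hincr : g' u - g' c ≤ 0 := sub_nonpos.2 (hmono hu hc huc)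
    have hdecr : g'' c - g'' u ≤ 0 := sub_nonpos.2 (hanti hu hc huc)
    exact mul_nonneg_of_nonpos_of_nonpos (sub_nonpos.2 huc)
      (add_nonpos (mul_nonpos_of_nonpos_of_nonneg hincr hg'')
        (mul_nonpos_of_nonneg_of_nonpos hg' hdecr))

end Discriminant

theorem antitoneOn_const_mul_rpow {k r : ℝ} (hk : 0 ≤ k) (hr : r ≤ 0) :
    AntitoneOn (fun x : ℝ => k * x ^ r) (Set.Ioi 0) :=
  (monotone_mul_left_of_nonneg hk).comp_antitoneOn (antitoneOn_rpow_Ioi_of_exponent_nonpos hr)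

theorem chow_wang_discriminant_nonneg_general {a u : ℝ} (ha₀ : 0 ≤ a) (ha₁ : a ≤ 1)
    (hu : 0 < u) :
    0 ≤ a * (1 - a) * u ^ (-1 - a) ∧
    0 ≤ (u - 1) *
      ((1 - (1 - a) * u ^ (-a)) * (a * (1 - a)) - a * (a * (1 - a) * u ^ (-1 - a))) := by
  have hb : 0 ≤ 1 - a := sub_nonneg.2 ha₁
  have hab : 0 ≤ a * (1 - a) := mul_nonneg ha₀ hb
  refine ⟨mul_nonneg hab (rpow_nonneg hu.le _), ?_⟩
  have hmono : MonotoneOn (fun x : ℝ => 1 - (1 - a) * x ^ (-a)) (Set.Ioi 0) :=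
    fun _ hx _ hy hxy =>
      sub_le_sub_left (antitoneOn_const_mul_rpow hb (neg_nonpos.2 ha₀) hx hy hxy) 1
  have hanti : AntitoneOn (fun x : ℝ => a * (1 - a) * x ^ (-1 - a)) (Set.Ioi 0) :=
    antitoneOn_const_mul_rpow hab (by linarith)
  simpa [chowWangDiscriminant] using
    chowWangDiscriminant_nonneg_of_monotoneOn_of_antitoneOn hmono hanti
      (Set.mem_Ioi.2 one_pos) hu (by simpa using ha₀) (by simpa using hab)

/-- For `n ≥ 4` and `g(u) = u - u^(1-4/n)` (so that
`g'(u) = 1 - (1-4/n) u^(-4/n)` and `g''(u) = (4/n)(1-4/n) u^(-1-4/n)`), for all `u > 0`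
one has `g''(u) ≥ 0` and `Δ(u) = (u-1)[g'(u) g''(1) - g'(1) g''(u)] ≥ 0`. -/
theorem chow_wang_discriminant_nonneg
    (n : ℕ) (hn : 4 ≤ n) (u : ℝ) (hu : 0 < u) :
    0 ≤ (4 / (n : ℝ)) * (1 - 4 / (n : ℝ)) * u ^ (-1 - 4 / (n : ℝ)) ∧
    0 ≤ (u - 1) *
      ((1 - (1 - 4 / (n : ℝ)) * u ^ (-(4 / (n : ℝ)))) * ((4 / (n : ℝ)) * (1 - 4 / (n : ℝ)))
        - (4 / (n : ℝ)) * ((4 / (n : ℝ)) * (1 - 4 / (n : ℝ)) * u ^ (-1 - 4 / (n : ℝ)))) :=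
  chow_wang_discriminant_nonneg_general (by positivity)
    (div_le_one_of_le₀ (by exact_mod_cast hn) n.cast_nonneg) hu
end
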